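/- Fix n ≥ 1. In the n+1 variables x_1, …, x_{n+1}, for 1 ≤ i ≤ n let h_i be the tropical polynomial x ↦ min(2x_i, x_i, 1) and let g_i be the tropical polynomial x ↦ min(2x_i, x_i, 1, 1 + x_{n+1}). Then ⋂_{i=1}^n T(g_i) ∩ ⋂_{i=1}^n T(h_i) = (({0,1}^n \ {(0,…,0)}) × [0, ∞)) ∪ ({(0,…,0)} × [−1, ∞)), where a pair (v, t) with v ∈ ℝ^n and t ∈ ℝ denotes the point (v_1, …, v_n, t) ∈ ℝ^{n+1}. -/

import Mathlib

open Finset Pointwise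

/-- The affine-linear function given by a tropical term with coefficient `c`
and exponent vector `α`. -/
def tropTerm {n : ℕ} (c : ℝ) (α : Fin n → ℕ) (x : Fin n → ℝ) : ℝ :=
  c + ∑ j, (α j : ℝ) * x j

/-- The tropical hypersurface of the tropical polynomial with support `A`
and coefficients `c`: the set of points where the minimum of the terms is
attained at least twice. -/
def tropHyp {n : ℕ} (A : Finset (Fin n → ℕ)) (c : (Fin n → ℕ) → ℝ) :
    Set (Fin n → ℝ) :=
  {x | ∃ α ∈ A, ∃ β ∈ A, α ≠ β ∧
    tropTerm (c α) α x = tropTerm (c β) β x ∧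
    ∀ γ ∈ A, tropTerm (c α) α x ≤ tropTerm (c γ) γ x}

/-- A tropical polynomial: a (finite) support of exponent vectors, and coefficients. -/
structure TropPoly (n : ℕ) where
  supp : Finset (Fin n → ℕ)
  coeff : (Fin n → ℕ) → ℝ

def TropPoly.hyp {n : ℕ} (f : TropPoly n) : Set (Fin n → ℝ) :=
  tropHyp f.supp f.coeff

/-- Tropical product of two tropical polynomials. -/
noncomputable def TropPoly.mul {n : ℕ} (f g : TropPoly n) : TropPoly n where
  supp := f.supp + g.supp
  coeff := fun γ =>
    sInf {r | ∃ α ∈ f.supp, ∃ β ∈ g.supp, α + β = γ ∧ r = f.coeff α + g.coeff β}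

/-- The tropical multiplicative unit (the constant polynomial `0`). -/
def TropPoly.one (n : ℕ) : TropPoly n := ⟨{0}, fun _ => 0⟩

/-- Tropical product of a list of tropical polynomials. -/
noncomputable def TropPoly.listProd {n : ℕ} (l : List (TropPoly n)) : TropPoly n :=
  l.foldr TropPoly.mul (TropPoly.one n)

/-- The exponent vector `k · e_i`. -/
def single {n : ℕ} (i : Fin n) (k : ℕ) : Fin n → ℕ :=
  fun j => if j = i then k else 0

/-!
The trinomial `hᵢ` has only two tropical roots, `xᵢ = 0` and `xᵢ = 1`, and at both of them its
minimum is the value `xᵢ` of the middle term. Since that minimum is already attained twice, the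
further term `1 + x_{n+1}` of `gᵢ` keeps the point on `T(gᵢ)` exactly when it does not undercut it,
i.e. when `xᵢ ≤ 1 + x_{n+1}`. The strongest of these bounds is `0 ≤ x_{n+1}` if some `xᵢ = 1`, and
`-1 ≤ x_{n+1}` otherwise.
-/

section MinAttainedTwice

variable {n : ℕ} {A : Finset (Fin n → ℕ)} {c : (Fin n → ℕ) → ℝ} {x : Fin n → ℝ}
  {α β γ : Fin n → ℕ}

theorem mem_tropHyp_insert_iff (hx : x ∈ tropHyp A c) (hα : α ∈ A)
    (hmin : ∀ γ ∈ A, tropTerm (c α) α x ≤ tropTerm (c γ) γ x) :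
    x ∈ tropHyp (insert β A) c ↔ tropTerm (c α) α x ≤ tropTerm (c β) β x := by
  constructor
  · rintro ⟨γ, hγ, δ, hδ, hne, heq, hle⟩
    have hleβ := hle β (mem_insert_self β A)
    -- Of two distinct minimizers at least one is not `β`, hence lies in `A`.
    rcases mem_insert.1 hγ with rfl | hγA
    · have hδA := mem_of_mem_insert_of_ne hδ hne.symm
      exact (hmin δ hδA).trans heq.ge
    · exact (hmin γ hγA).trans hleβ
  · intro hαβ
    obtain ⟨γ, hγ, δ, hδ, hne, heq, hle⟩ := hx
    exact ⟨γ, mem_insert_of_mem hγ, δ, mem_insert_of_mem hδ, hne, heq,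
      (forall_mem_insert β A _).2 ⟨(hle α hα).trans hαβ, hle⟩⟩

theorem mem_tropHyp_triple_iff (hαβ : α ≠ β) (hβγ : β ≠ γ)
    (hmid : 2 * tropTerm (c β) β x ≤ tropTerm (c α) α x + tropTerm (c γ) γ x) :
    x ∈ tropHyp {α, β, γ} c ↔
      tropTerm (c α) α x = tropTerm (c β) β x ∨ tropTerm (c β) β x = tropTerm (c γ) γ x := by
  constructor
  · rintro ⟨δ, hδ, ε, hε, hne, heq, hle⟩
    have hleβ := hle β (by simp)
    simp only [mem_insert, mem_singleton] at hδ hε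
    -- If the two outer terms tie for the minimum, `hmid` makes the middle one tie with them.
    rcases hδ with rfl | rfl | rfl <;> rcases hε with rfl | rfl | rfl <;> grind
  · rintro (h | h)
    · exact ⟨α, by simp, β, by simp, hαβ, h, by simpa using ⟨by linarith, by linarith⟩⟩
    · exact ⟨β, by simp, γ, by simp, hβγ, h, by simpa using ⟨by linarith, by linarith⟩⟩

end MinAttainedTwice

section Quadratic

variable {n : ℕ} {i : Fin n} {c : (Fin n → ℕ) → ℝ} {x : Fin n → ℝ}

theorem tropTerm_zero (a : ℝ) (x : Fin n → ℝ) : tropTerm a 0 x = a := by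
  simp [tropTerm]

theorem tropTerm_single (a : ℝ) (i : Fin n) (k : ℕ) (x : Fin n → ℝ) :
    tropTerm a (single i k) x = a + k * x i := by
  simp [tropTerm, single]

theorem single_injective (i : Fin n) : Function.Injective (single i) := fun k l h => by
  simpa [single] using congrFun h i

theorem single_ne_zero (i : Fin n) {k : ℕ} (hk : k ≠ 0) : single i k ≠ 0 := fun h =>
  hk (by simpa [single] using congrFun h i)

theorem single_ne_single {j : Fin n} (hij : i ≠ j) {k : ℕ} (hk : k ≠ 0) (l : ℕ) :
    single i k ≠ single j l := fun h =>
  hk (by simpa [single, hij] using congrFun h i)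

theorem mem_tropHyp_quadratic_iff (hc : 2 * c (single i 1) ≤ c (single i 2) + c 0) :
    x ∈ tropHyp {single i 2, single i 1, 0} c ↔
      x i = c (single i 1) - c (single i 2) ∨ x i = c 0 - c (single i 1) := by
  have hmid : 2 * tropTerm (c (single i 1)) (single i 1) x ≤
      tropTerm (c (single i 2)) (single i 2) x + tropTerm (c 0) 0 x := by
    simp only [tropTerm_single, tropTerm_zero]
    push_cast
    linarith
  rw [mem_tropHyp_triple_iff ((single_injective i).ne (by decide))
    (single_ne_zero i one_ne_zero) hmid]
  simp only [tropTerm_single, tropTerm_zero]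
  push_cast
  grind

theorem mem_tropHyp_insert_quadratic_iff (hc : 2 * c (single i 1) ≤ c (single i 2) + c 0)
    (hx : x ∈ tropHyp {single i 2, single i 1, 0} c) (β : Fin n → ℕ) :
    x ∈ tropHyp (insert β {single i 2, single i 1, 0}) c ↔
      c (single i 1) + x i ≤ tropTerm (c β) β x := by
  have hmin : ∀ γ ∈ ({single i 2, single i 1, 0} : Finset (Fin n → ℕ)),
      tropTerm (c (single i 1)) (single i 1) x ≤ tropTerm (c γ) γ x := by
    simp only [forall_mem_insert, mem_singleton, forall_eq, tropTerm_single, tropTerm_zero]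
    push_cast
    rcases (mem_tropHyp_quadratic_iff hc).1 hx with h | h <;>
      refine ⟨?_, ?_, ?_⟩ <;> linarith
  simpa [tropTerm_single] using mem_tropHyp_insert_iff (β := β) hx (by simp) hmin

end Quadratic

theorem mem_tropHyp_h_iff {n : ℕ} (i : Fin n) (x : Fin n → ℝ) :
    x ∈ tropHyp {single i 2, single i 1, 0} (fun α => if α = 0 then 1 else 0) ↔
      x i = 0 ∨ x i = 1 := by
  rw [mem_tropHyp_quadratic_iff] <;> simp [single_ne_zero]

theorem mem_tropHyp_g_iff {n : ℕ} {i j : Fin n} (hij : i ≠ j) {x : Fin n → ℝ}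
    (hx : x i = 0 ∨ x i = 1) :
    x ∈ tropHyp {single i 2, single i 1, single j 1, 0}
        (fun α => if α = 0 then 1 else if α = single j 1 then 1 else 0) ↔
      x i ≤ 1 + x j := by
  have hsupp : ({single i 2, single i 1, single j 1, 0} : Finset (Fin n → ℕ)) =
      insert (single j 1) {single i 2, single i 1, 0} := by
    rw [Finset.insert_comm (single i 1), Finset.insert_comm (single i 2)]
  rw [hsupp, mem_tropHyp_insert_quadratic_iff]
  · simp [tropTerm_single, single_ne_zero, single_ne_single hij]
  · simp [single_ne_zero, single_ne_single hij]
  · rw [mem_tropHyp_quadratic_iff]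
    · simpa [single_ne_zero, single_ne_single hij] using hx
    · simp [single_ne_zero, single_ne_single hij]

theorem forall_zero_or_one_and_le_one_add_iff {ι : Type*} [Nonempty ι] (v : ι → ℝ) (t : ℝ) :
    (∀ i, (v i = 0 ∨ v i = 1) ∧ v i ≤ 1 + t) ↔
      ((∀ i, v i = 0 ∨ v i = 1) ∧ (∃ i, v i ≠ 0) ∧ 0 ≤ t) ∨ ((∀ i, v i = 0) ∧ -1 ≤ t) := by
  rw [forall_and]
  constructor
  · rintro ⟨hv, hle⟩
    by_cases hzero : ∀ i, v i = 0
    · obtain ⟨i⟩ := ‹Nonempty ι›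
      exact .inr ⟨hzero, by linarith [hle i, hzero i]⟩
    · obtain ⟨i, hi⟩ := not_forall.1 hzero
      exact .inl ⟨hv, ⟨i, hi⟩, by linarith [hle i, (hv i).resolve_left hi]⟩
  · rintro (⟨hv, -, ht⟩ | ⟨hzero, ht⟩)
    · exact ⟨hv, fun i => by rcases hv i with h | h <;> linarith⟩
    · exact ⟨fun i => .inl (hzero i), fun i => by linarith [hzero i]⟩

/-- In the `n+1` variables `x₁, …, x_{n+1}`, with
`hᵢ = min (2xᵢ) xᵢ 1` and `gᵢ = min (2xᵢ) xᵢ 1 (1 + x_{n+1})` for `1 ≤ i ≤ n`,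
the intersection `⋂ᵢ T(gᵢ) ∩ ⋂ᵢ T(hᵢ)` is the union of the upward half rays
`({0,1}ⁿ \ {0}) × [0,∞)` and `{0} × [-1,∞)`. -/
theorem ray_prevariety (n : ℕ) (hn : 1 ≤ n) :
    ((⋂ i : Fin n, tropHyp
        ({single (Fin.castSucc i) 2, single (Fin.castSucc i) 1,
          single (Fin.last n) 1, (0 : Fin (n + 1) → ℕ)} : Finset (Fin (n + 1) → ℕ))
        (fun α => if α = 0 then (1 : ℝ)
          else if α = single (Fin.last n) 1 then 1 else 0)) ∩
      ⋂ i : Fin n, tropHyp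
        ({single (Fin.castSucc i) 2, single (Fin.castSucc i) 1,
          (0 : Fin (n + 1) → ℕ)} : Finset (Fin (n + 1) → ℕ))
        (fun α => if α = 0 then (1 : ℝ) else 0))
      = {x : Fin (n + 1) → ℝ |
          ((∀ j : Fin n, x (Fin.castSucc j) = 0 ∨ x (Fin.castSucc j) = 1) ∧
            (∃ j : Fin n, x (Fin.castSucc j) ≠ 0) ∧ 0 ≤ x (Fin.last n)) ∨
          ((∀ j : Fin n, x (Fin.castSucc j) = 0) ∧ -1 ≤ x (Fin.last n))} := by
  have : Nonempty (Fin n) := ⟨⟨0, hn⟩⟩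
  ext x
  rw [Set.mem_ofPred_eq, ← forall_zero_or_one_and_le_one_add_iff (fun i : Fin n => x i.castSucc)]
  simp only [Set.mem_inter_iff, Set.mem_iInter, ← forall_and]
  refine forall_congr' fun i => ?_
  rw [mem_tropHyp_h_iff, and_comm, and_congr_right_iff]
  exact mem_tropHyp_g_iff (Fin.castSucc_ne_last i)
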